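/- Let λ₁ and λ₂ be post-processings from n outcomes to m outcomes. Then F(λ₁,λ₂) = min over i ∈ {1,…,n} of Σ_{y=1}^m √(λ₁(i|y)·λ₂(i|y)). In particular the infimum defining F(λ₁,λ₂) is attained at a point mass. -/

import Mathlib

open scoped BigOperators Kronecker ComplexOrder Matrix

noncomputable section


namespace QProg

/-- The positive semidefinite square root of a positive semidefinite matrix
(the definition of the older Mathlib, since removed). -/
noncomputable def _root_.Matrix.PosSemidef.sqrt {n 𝕜 : Type*} [Fintype n] [RCLike 𝕜]
    [DecidableEq n] {A : Matrix n n 𝕜} (hA : A.PosSemidef) : Matrix n n 𝕜 :=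
  hA.1.eigenvectorUnitary.1 * Matrix.diagonal ((↑) ∘ Real.sqrt ∘ hA.1.eigenvalues) *
    (star hA.1.eigenvectorUnitary : Matrix n n 𝕜)

/-- The positive-semidefinite square root of a matrix, extended by `0` to all matrices. -/
noncomputable def matSqrt {α : Type*} [Fintype α] [DecidableEq α]
    (A : Matrix α α ℂ) : Matrix α α ℂ :=
  @dite _ A.PosSemidef (Classical.propDecidable _) (fun h => h.sqrt) (fun _ => 0)

/-- The fidelity `F(ρ,σ) = Tr √(√ρ σ √ρ)` of two (density) matrices. -/
noncomputable def fid {α : Type*} [Fintype α] [DecidableEq α]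
    (ρ σ : Matrix α α ℂ) : ℝ :=
  ((matSqrt (matSqrt ρ * σ * matSqrt ρ)).trace).re

/-- A density matrix: positive semidefinite with unit trace. -/
def IsDensity {α : Type*} [Fintype α] [DecidableEq α] (ρ : Matrix α α ℂ) : Prop :=
  ρ.PosSemidef ∧ ρ.trace = 1

/-- An `n`-outcome POVM: positive semidefinite effects summing to the identity. -/
def IsPOVM {α : Type*} [Fintype α] [DecidableEq α] {n : ℕ}
    (E : Fin n → Matrix α α ℂ) : Prop :=
  (∀ i, (E i).PosSemidef) ∧ ∑ i, E i = 1

/-- The outcome distribution `p^E_ρ(i) = Tr[E(i) ρ]`. -/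
noncomputable def outDist {α : Type*} [Fintype α] [DecidableEq α] {n : ℕ}
    (E : Fin n → Matrix α α ℂ) (ρ : Matrix α α ℂ) (i : Fin n) : ℝ :=
  ((E i * ρ).trace).re

/-- The Bhattacharyya coefficient `B(p,q) = ∑ᵢ √(p i) √(q i)`. -/
noncomputable def bhat {n : ℕ} (p q : Fin n → ℝ) : ℝ :=
  ∑ i, Real.sqrt (p i) * Real.sqrt (q i)

/-- `B(E₁,E₂)`: infimum of `B(p^{E₁}_{ρ₁}, p^{E₂}_{ρ₂}) / F(ρ₁,ρ₂)` over pairs of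
density matrices with nonvanishing fidelity. -/
noncomputable def obsB {α : Type*} [Fintype α] [DecidableEq α] {n : ℕ}
    (E₁ E₂ : Fin n → Matrix α α ℂ) : ℝ :=
  sInf { r : ℝ | ∃ ρ₁ ρ₂ : Matrix α α ℂ, IsDensity ρ₁ ∧ IsDensity ρ₂ ∧
    fid ρ₁ ρ₂ ≠ 0 ∧ r = bhat (outDist E₁ ρ₁) (outDist E₂ ρ₂) / fid ρ₁ ρ₂ }

/-- A post-processing from `n` outcomes to `m` outcomes. -/
def IsPostProc {n m : ℕ} (lam : Fin n → Fin m → ℝ) : Prop :=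
  (∀ i y, 0 ≤ lam i y) ∧ ∀ i, ∑ y, lam i y = 1

/-- The action `(λ⋆E)(y) = ∑ᵢ λ(i|y) E(i)` of a post-processing on a POVM. -/
noncomputable def ppStar {α : Type*} [Fintype α] [DecidableEq α] {n m : ℕ}
    (lam : Fin n → Fin m → ℝ) (E : Fin n → Matrix α α ℂ) (y : Fin m) :
    Matrix α α ℂ :=
  ∑ i, (lam i y : ℂ) • E i

/-- The action `(λ⋆p)(y) = ∑ᵢ λ(i|y) p(i)` of a post-processing on a probability vector. -/
noncomputable def ppStarVec {n m : ℕ} (lam : Fin n → Fin m → ℝ) (p : Fin n → ℝ)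
    (y : Fin m) : ℝ :=
  ∑ i, lam i y * p i

/-- A probability vector on `{1,…,n}`. -/
def IsProbVec {n : ℕ} (p : Fin n → ℝ) : Prop :=
  (∀ i, 0 ≤ p i) ∧ ∑ i, p i = 1

/-- `F(λ₁,λ₂)`: infimum of `B(λ₁⋆p, λ₂⋆p)` over probability vectors `p`. -/
noncomputable def ppF {n m : ℕ} (lam₁ lam₂ : Fin n → Fin m → ℝ) : ℝ :=
  sInf { r : ℝ | ∃ p : Fin n → ℝ, IsProbVec p ∧
    r = bhat (ppStarVec lam₁ p) (ppStarVec lam₂ p) }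

/-- Lemma of Section 4.2:
`F(λ₁,λ₂) = minᵢ ∑_y √(λ₁(i|y) λ₂(i|y))`; the infimum is attained at a point mass. -/
theorem ppF_eq_min {n m : ℕ} (hn : 0 < n)
    (lam₁ lam₂ : Fin n → Fin m → ℝ) (hlam₁ : IsPostProc lam₁) (hlam₂ : IsPostProc lam₂) :
    ppF lam₁ lam₂ =
      Finset.univ.inf' (Finset.univ_nonempty_iff.mpr ⟨⟨0, hn⟩⟩)
        (fun i => ∑ y, Real.sqrt (lam₁ i y) * Real.sqrt (lam₂ i y)) := by
  have key : ∀ p : Fin n → ℝ, IsProbVec p →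
      ∑ i, p i * (∑ y, Real.sqrt (lam₁ i y) * Real.sqrt (lam₂ i y)) ≤
        bhat (ppStarVec lam₁ p) (ppStarVec lam₂ p) := by
    intro p hp
    unfold bhat ppStarVec
    have h1 : ∑ i, p i * (∑ y, Real.sqrt (lam₁ i y) * Real.sqrt (lam₂ i y)) =
        ∑ y, ∑ i, Real.sqrt (lam₁ i y * p i) * Real.sqrt (lam₂ i y * p i) := by
      rw [Finset.sum_comm]
      refine Finset.sum_congr rfl fun i _ => ?_
      rw [Finset.mul_sum]
      refine Finset.sum_congr rfl fun y _ => ?_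
      rw [Real.sqrt_mul (hlam₁.1 i y), Real.sqrt_mul (hlam₂.1 i y)]
      have := Real.mul_self_sqrt (hp.1 i)
      linear_combination (-(Real.sqrt (lam₁ i y) * Real.sqrt (lam₂ i y))) * this
    rw [h1]
    refine Finset.sum_le_sum fun y _ => ?_
    exact Real.sum_sqrt_mul_sqrt_le _ (fun i => mul_nonneg (hlam₁.1 i y) (hp.1 i))
      (fun i => mul_nonneg (hlam₂.1 i y) (hp.1 i))
  refine IsLeast.csInf_eq ⟨?_, ?_⟩
  · obtain ⟨i, -, hi⟩ := Finset.exists_mem_eq_inf' (Finset.univ_nonempty_iff.mpr ⟨⟨0, hn⟩⟩)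
      (fun i : Fin n => ∑ y, Real.sqrt (lam₁ i y) * Real.sqrt (lam₂ i y))
    refine ⟨Pi.single i 1, ⟨fun j => ?_, ?_⟩, ?_⟩
    · by_cases h : j = i
      · subst h; simp
      · simp [h]
    · simp
    · rw [hi]
      simp [bhat, ppStarVec, Pi.single_apply]
  · rintro r ⟨p, hp, rfl⟩
    refine le_trans ?_ (key p hp)
    set c := Finset.univ.inf' (Finset.univ_nonempty_iff.mpr ⟨⟨0, hn⟩⟩)
      (fun i : Fin n => ∑ y, Real.sqrt (lam₁ i y) * Real.sqrt (lam₂ i y)) with hc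
    calc c = ∑ i, p i * c := by rw [← Finset.sum_mul, hp.2, one_mul]
      _ ≤ _ := Finset.sum_le_sum fun i _ =>
        mul_le_mul_of_nonneg_left (Finset.inf'_le _ (Finset.mem_univ i)) (hp.1 i)
end QProg
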